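/- The Ramsey–Turán density satisfies ρ_6(12) ≤ 5/12; equivalently, for every δ > 0 there exist ε > 0 and n_0 such that every K_{12}-free graph G on n ≥ n_0 vertices with α_6(G) ≤ ε·n has at most (5/12 + δ)·C(n,2) edges. -/

import Mathlib

/-!
The Szemerédi regularity lemma turns `G` into a weighted reduced graph on the `k` clusters, keeping the
uniform pairs of density bounded below (`redWeight`). Up to a small proportion of `n²`, twice the
number of edges of `G` is `n²` times the quadratic form of this weighted graph, evaluated at the
relative sizes of the clusters (`two_mul_edgeCount_le`). So it suffices to bound that form by
`5/12 + o(1)`.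

*Embedding.* Since `α₆(G)` is tiny, every non-negligible subset of a cluster contains a `K₆`. Take a
`K₆` of typical vertices in a cluster `A`, joined to another cluster `B` with density more than
`(ℓ - 1)/6`. By averaging, `ℓ` of its vertices have a common neighbourhood of positive proportion in
`B`, and a `K₆` in there gives a `K_{ℓ+6}` (`exists_common`, `exists_clique_pair`). If `r` further
clusters are all joined to each other and to `A` and `B`, they contribute one generic vertex each, so
there is a `K_{r+ℓ+6}` (`exists_clique_generic`). Hence, in a `K₁₂`-free graph, the weights inside a
clique of `r + 2` clusters are at most `(5 - r)/6 + o(1)`. Moreover no three clusters have all their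
densities above `3/6`: two 4-subsets of a `K₆` in the first cluster, with large common neighbourhoods
in the second and the third, share two vertices, and a `K₁₀` in these common neighbourhoods completes
a `K₁₂` (`exists_clique_triangle`).

*Optimisation.* Shifting weight between non-adjacent clusters reduces to vectors supported on a
clique of the reduced graph (`quadForm_le`). Up to `o(1)`, the form is then at most `0` for one
cluster, `5/6 · 1/2 = 5/12` for two, `16/39 < 5/12` for three (weights at most `4/6`, one of them at
most `3/6`; `triangle_bound`), `3/6 · 3/4 = 3/8` for four, and `2/6` for five or more.
-/

open Finset
open scoped Classical

/-- `α_p(G)`: the largest size of a vertex subset inducing a `K_p`-free subgraph. -/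
noncomputable def alphaP {V : Type} [Fintype V] (p : ℕ) (G : SimpleGraph V) : ℕ :=
  sSup {k : ℕ | ∃ s : Finset V, s.card = k ∧ ∀ t : Finset V, t ⊆ s → ¬ G.IsNClique p t}

/-- The number of edges of `G`. -/
noncomputable def edgeCount {V : Type} [Fintype V] (G : SimpleGraph V) : ℕ :=
  G.edgeSet.ncard

/-! ### Embedding cliques in regular pairs -/

/-- Lower regularity of the pair `(A, B)`: all subsets of size at least `s` span density at least
`d`. The threshold `s` is absolute rather than relative to `#A` and `#B`, so the property passes to
subsets of `A` and `B` with no loss in the parameters. -/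
def LR {V : Type} (G : SimpleGraph V) (s d : ℝ) (A B : Finset V) : Prop :=
  ∀ A' ⊆ A, ∀ B' ⊆ B, s ≤ #A' → s ≤ #B' →
    d * #A' * #B' ≤ #(G.interedges A' B')

theorem LR.mono {V : Type} {G : SimpleGraph V} {s d : ℝ} {A B A' B' : Finset V}
    (h : LR G s d A B) (hA : A' ⊆ A) (hB : B' ⊆ B) : LR G s d A' B' :=
  fun X hX Y hY => h X (hX.trans hA) Y (hY.trans hB)

theorem card_interedges_eq_sum {V : Type} (G : SimpleGraph V) (A B : Finset V) :
    #(G.interedges A B) = ∑ v ∈ A, #(B.filter (G.Adj v)) := by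
  rw [SimpleGraph.interedges_def, card_filter, sum_product]
  exact sum_congr rfl fun v _ => (card_filter _ _).symm

/-- Fewer than `s` vertices of `A` have fewer than `d * #B` neighbours in `B`: otherwise these
vertices together with `B` would violate lower regularity. -/
theorem LR.card_atypical_lt {V : Type} {G : SimpleGraph V} {s d : ℝ} {A B : Finset V}
    (h : LR G s d A B) (hs : 0 < s) (hB : s ≤ #B) :
    (#(A.filter fun v => (#(B.filter (G.Adj v)) : ℝ) < d * #B) : ℝ) < s := by
  by_contra! hc
  set A' := A.filter fun v => (#(B.filter (G.Adj v)) : ℝ) < d * #B with hA'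
  have h1 := h A' (filter_subset _ _) B subset_rfl hc hB
  have hne : A'.Nonempty := by
    rw [← card_pos]; exact_mod_cast hs.trans_le hc
  have h2 : ((#(G.interedges A' B) : ℕ) : ℝ) < ∑ v ∈ A', d * #B := by
    rw [card_interedges_eq_sum]
    push_cast
    exact sum_lt_sum_of_nonempty hne fun v hv => (mem_filter.1 hv).2
  rw [sum_const, nsmul_eq_mul] at h2
  linarith

/-- After discarding fewer than `s` vertices for each `j ∈ J`, the remaining vertices of `A` have at
least the expected number of neighbours in every `B j`. -/
theorem exists_typical {V ι : Type} {G : SimpleGraph V} {s : ℝ} (hs : 0 < s)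
    (A : Finset V) (J : Finset ι) (B : ι → Finset V) (d : ι → ℝ)
    (h : ∀ j ∈ J, LR G s (d j) A (B j)) (hB : ∀ j ∈ J, s ≤ #(B j))
    (hA : (#J + 1) * s ≤ #A) :
    ∃ A' ⊆ A, s ≤ #A' ∧ ∀ v ∈ A', ∀ j ∈ J, d j * #(B j) ≤ #((B j).filter (G.Adj v)) := by
  let bad : ι → Finset V := fun j =>
    A.filter fun v => (#((B j).filter (G.Adj v)) : ℝ) < d j * #(B j)
  refine ⟨A \ J.biUnion bad, sdiff_subset, ?_, ?_⟩
  · have h1 : (#(J.biUnion bad) : ℝ) ≤ #J * s := by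
      calc (#(J.biUnion bad) : ℝ) ≤ ∑ j ∈ J, (#(bad j) : ℝ) := by exact_mod_cast card_biUnion_le
        _ ≤ ∑ j ∈ J, s := sum_le_sum fun j hj => ((h j hj).card_atypical_lt hs (hB j hj)).le
        _ = #J * s := by simp
    have h2 : (#A : ℝ) ≤ #(A \ J.biUnion bad) + #(J.biUnion bad) := by
      exact_mod_cast card_le_card_sdiff_add_card
    linarith
  · intro v hv j hj
    rw [mem_sdiff, mem_biUnion] at hv
    by_contra! hc
    exact hv.2 ⟨j, hj, mem_filter.2 ⟨hv.1, hc⟩⟩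

/-- If every vertex of a 6-set `Q` is joined to more than a proportion `(ℓ - 1) / 6` of `B`, then at
least `ℓ` vertices of `Q` have a positive proportion of `B` as common neighbourhood. The vertices of
`B` are sorted by their trace on `Q`: the average trace has more than `ℓ - 1` elements, and there are
only `2 ^ 6 = 64` traces. -/
theorem exists_common {V : Type} {G : SimpleGraph V} {η : ℝ} (hη : 0 < η) {ℓ : ℕ} (hℓ : 1 ≤ ℓ)
    {Q B : Finset V} (hQ : #Q = 6) (hB : 0 < #B)
    (h : ∀ v ∈ Q, (((ℓ : ℝ) - 1) / 6 + η) * #B ≤ #(B.filter (G.Adj v))) :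
    ∃ T ⊆ Q, ℓ ≤ #T ∧ ∃ B' ⊆ B, η / 64 * #B ≤ #B' ∧ ∀ v ∈ T, ∀ b ∈ B', G.Adj v b := by
  by_contra! hc
  let C : Finset V → Finset V := fun T => B.filter fun b => Q.filter (fun v => G.Adj v b) = T
  have hC : ∀ T ⊆ Q, ℓ ≤ #T → (#(C T) : ℝ) < η / 64 * #B := by
    intro T hT hl
    by_contra! hlt
    obtain ⟨v, hv, b, hb, hvb⟩ := hc T hT hl (C T) (filter_subset _ _) hlt
    rw [← (mem_filter.1 hb).2] at hv
    exact hvb (mem_filter.1 hv).2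
  have hmaps : ∀ b ∈ B, Q.filter (fun v => G.Adj v b) ∈ Q.powerset :=
    fun b _ => mem_powerset.2 (filter_subset _ _)
  have hcard : (#B : ℝ) = ∑ T ∈ Q.powerset, (#(C T) : ℝ) := by
    exact_mod_cast card_eq_sum_card_fiberwise hmaps
  -- Double counting of the edges between `Q` and `B`.
  have hdc : ∑ v ∈ Q, (#(B.filter (G.Adj v)) : ℝ) = ∑ T ∈ Q.powerset, (#T : ℝ) * #(C T) := by
    have h1 : ∑ v ∈ Q, #(B.filter (G.Adj v)) = ∑ b ∈ B, #(Q.filter fun v => G.Adj v b) := by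
      simp only [card_filter]
      exact sum_comm
    have h2 : ∑ b ∈ B, #(Q.filter fun v => G.Adj v b) = ∑ T ∈ Q.powerset, #T * #(C T) := by
      rw [← sum_fiberwise_of_maps_to hmaps]
      refine sum_congr rfl fun T _ => ?_
      rw [sum_congr rfl (g := fun _ => #T) fun b hb => by rw [(mem_filter.1 hb).2]]
      rw [sum_const, smul_eq_mul, mul_comm]
    exact_mod_cast h1.trans h2
  have hlow : 6 * ((((ℓ : ℝ) - 1) / 6 + η) * #B) ≤ ∑ v ∈ Q, (#(B.filter (G.Adj v)) : ℝ) := by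
    have := card_nsmul_le_sum Q (fun v => (#(B.filter (G.Adj v)) : ℝ)) _ h
    rw [hQ, nsmul_eq_mul] at this
    exact_mod_cast this
  have hBpos : (0 : ℝ) < #B := by exact_mod_cast hB
  have hℓ' : (1 : ℝ) ≤ ℓ := by exact_mod_cast hℓ
  have hup : ∑ T ∈ Q.powerset, (#T : ℝ) * #(C T)
      < ∑ T ∈ Q.powerset, (((ℓ : ℝ) - 1) * #(C T) + 6 * (η / 64 * #B)) := by
    refine sum_lt_sum (fun T hT => ?_) ⟨∅, empty_mem_powerset _, ?_⟩
    · have hT' := mem_powerset.1 hT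
      have h6 : (#T : ℝ) ≤ 6 := by exact_mod_cast hQ ▸ card_le_card hT'
      have h0 : (0 : ℝ) ≤ #(C T) := by positivity
      rcases le_or_gt ℓ #T with hl | hl
      · have := hC T hT' hl
        nlinarith
      · have : (#T : ℝ) ≤ ℓ - 1 := by
          have : (#T : ℝ) + 1 ≤ ℓ := by exact_mod_cast hl
          linarith
        have h3 : 0 < η / 64 * #B := by positivity
        nlinarith
    · have h3 : 0 < η / 64 * #B := by positivity
      have h0 : (0 : ℝ) ≤ #(C ∅) := by positivity
      rw [card_empty]
      push_cast
      nlinarith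
  rw [sum_add_distrib, ← mul_sum, ← hcard, sum_const, card_powerset, hQ, nsmul_eq_mul] at hup
  push_cast at hup
  rw [← hdc] at hup
  linarith

theorem isClique_union {V : Type} {G : SimpleGraph V} {S T : Finset V}
    (hS : G.IsClique (S : Set V)) (hT : G.IsClique (T : Set V))
    (h : ∀ a ∈ S, ∀ b ∈ T, G.Adj a b) :
    G.IsClique ((S ∪ T : Finset V) : Set V) ∧ #(S ∪ T) = #S + #T := by
  constructor
  · intro a ha b hb hab
    rw [mem_coe, mem_union] at ha hb
    rcases ha with ha | ha <;> rcases hb with hb | hb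
    · exact hS ha hb hab
    · exact h a ha b hb
    · exact (h b hb a ha).symm
    · exact hT ha hb hab
  · refine card_union_of_disjoint (disjoint_left.2 fun a ha hb => ?_)
    exact G.irrefl (h a ha a hb)

/-- A lower regular pair of density above `(ℓ - 1) / 6` contains a clique of size `ℓ + 6`: `ℓ` vertices
of a `K₆` in `A`, and a `K₆` in their common neighbourhood in `B`. -/
theorem exists_clique_pair {V : Type} {G : SimpleGraph V} {s η M : ℝ} (hs : 0 < s) (hη : 0 < η)
    (hM : 10 ≤ M) (hMη : 64 ≤ M * η) {ℓ : ℕ} (hℓ : 1 ≤ ℓ)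
    (h6 : ∀ S : Finset V, s ≤ #S → ∃ Q ⊆ S, G.IsNClique 6 Q)
    {A B : Finset V} (h : LR G s (((ℓ : ℝ) - 1) / 6 + η) A B)
    (hA : M * s ≤ #A) (hB : M * s ≤ #B) :
    ∃ Q : Finset V, G.IsClique (Q : Set V) ∧ ℓ + 6 ≤ #Q ∧ Q ⊆ A ∪ B := by
  obtain ⟨A', hA'A, hA's, hA'⟩ := exists_typical hs A ({()} : Finset Unit) (fun _ => B)
    (fun _ => ((ℓ : ℝ) - 1) / 6 + η) (fun _ _ => h) (fun _ _ => by nlinarith)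
    (by simp; nlinarith)
  obtain ⟨Q, hQA, hQ⟩ := h6 A' hA's
  have hB0 : 0 < #B := by
    have : (0 : ℝ) < #B := lt_of_lt_of_le (by positivity) hB
    exact_mod_cast this
  obtain ⟨T, hTQ, hT, B', hB'B, hB', hTB⟩ := exists_common hη hℓ hQ.card_eq hB0
    (fun v hv => hA' v (hQA hv) () (by simp))
  obtain ⟨R, hRB, hR⟩ := h6 B' (le_trans (by
    have : η / 64 * (M * s) ≤ η / 64 * #B := by gcongr
    nlinarith) hB')
  have := isClique_union (hQ.isClique.subset (coe_subset.2 hTQ)) hR.isClique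
    fun a ha b hb => hTB a ha b (hRB hb)
  refine ⟨T ∪ R, this.1, by rw [this.2, hR.card_eq]; omega, ?_⟩
  exact union_subset_union (hTQ.trans (hQA.trans hA'A)) (hRB.trans hB'B)

/-- For `r + 2` clusters which are pairwise of positive density, with density above `(ℓ - 1) / 6`
between `x` and `y`, there is a clique of size `r + ℓ + 6`. A typical vertex of each of the other `r`
clusters is taken in turn, restricting to its neighbourhood, which costs a factor `d₀` in the size of
the clusters; `exists_clique_pair` applies to what is left of `x` and `y`. -/
theorem exists_clique_generic {V ι : Type} {G : SimpleGraph V} {s η M d₀ : ℝ} (hs : 0 < s)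
    (hη : 0 < η) (hM : 10 ≤ M) (hMη : 64 ≤ M * η) (hd₀ : 0 < d₀) (hd₁ : d₀ ≤ 1)
    {ℓ : ℕ} (hℓ : 1 ≤ ℓ)
    (h6 : ∀ S : Finset V, s ≤ #S → ∃ Q ⊆ S, G.IsNClique 6 Q) (r : ℕ) (hr : r ≤ 3)
    (I : Finset ι) (A : ι → Finset V) {x y : ι} (hx : x ∈ I) (hy : y ∈ I) (hxy : x ≠ y)
    (hI : #I = r + 2) (h : ∀ i ∈ I, ∀ j ∈ I, i ≠ j → LR G s d₀ (A i) (A j))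
    (hA : LR G s (((ℓ : ℝ) - 1) / 6 + η) (A x) (A y))
    (hcard : ∀ i ∈ I, M * s ≤ d₀ ^ r * #(A i)) :
    ∃ Q : Finset V, G.IsClique (Q : Set V) ∧ r + ℓ + 6 ≤ #Q ∧ Q ⊆ I.biUnion A := by
  induction r generalizing I A with
  | zero =>
    simp only [pow_zero, one_mul] at hcard
    obtain ⟨Q, h1, h2, h3⟩ :=
      exists_clique_pair hs hη hM hMη hℓ h6 hA (hcard x hx) (hcard y hy)
    refine ⟨Q, h1, by omega, h3.trans (union_subset ?_ ?_)⟩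
    · exact subset_biUnion_of_mem A hx
    · exact subset_biUnion_of_mem A hy
  | succ r ih =>
    have hlarge : ∀ i ∈ I, M * s ≤ #(A i) := fun i hi => (hcard i hi).trans <| by
      have : d₀ ^ (r + 1) ≤ 1 := pow_le_one₀ hd₀.le hd₁
      have h0 : (0 : ℝ) ≤ #(A i) := by positivity
      nlinarith
    obtain ⟨i, hi⟩ : ((I.erase x).erase y).Nonempty := by
      rw [← card_pos, card_erase_of_mem (mem_erase.2 ⟨hxy.symm, hy⟩), card_erase_of_mem hx]
      omega
    simp only [mem_erase] at hi
    obtain ⟨hiy, hix, hi⟩ := hi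
    have hJ : #(I.erase i) = r + 2 := by rw [card_erase_of_mem hi]; omega
    obtain ⟨A', hA'A, hA's, hA'⟩ := exists_typical hs (A i) (I.erase i) A (fun _ => d₀)
      (fun j hj => h i hi j (mem_of_mem_erase hj) (ne_of_mem_erase hj).symm)
      (fun j hj => by have := hlarge j (mem_of_mem_erase hj); nlinarith)
      (by
        have h1 := hlarge i hi
        have : (r : ℝ) ≤ 3 := by exact_mod_cast (by omega : r ≤ 3)
        rw [hJ]; push_cast; nlinarith)
    obtain ⟨v, hv⟩ : A'.Nonempty := by
      rw [← card_pos]; exact_mod_cast hs.trans_le hA's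
    obtain ⟨Q, hQ, hQc, hQA⟩ := ih (by omega) (I.erase i) (fun j => (A j).filter (G.Adj v))
      (mem_erase.2 ⟨hix.symm, hx⟩) (mem_erase.2 ⟨hiy.symm, hy⟩) hJ
      (fun a ha b hb hab => (h a (mem_of_mem_erase ha) b (mem_of_mem_erase hb) hab).mono
        (filter_subset _ _) (filter_subset _ _))
      (hA.mono (filter_subset _ _) (filter_subset _ _))
      (fun j hj => by
        refine (hcard j (mem_of_mem_erase hj)).trans ?_
        rw [pow_succ, mul_assoc]
        gcongr
        exact hA' v hv j hj)
    have hu := isClique_union (S := {v}) (by simp) hQ (fun a ha b hb => by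
      rw [mem_singleton] at ha
      subst ha
      obtain ⟨j, -, hj⟩ := mem_biUnion.1 (hQA hb)
      exact (mem_filter.1 hj).2)
    refine ⟨{v} ∪ Q, hu.1, by rw [hu.2, card_singleton]; omega, union_subset ?_ ?_⟩
    · rw [singleton_subset_iff, mem_biUnion]
      exact ⟨i, hi, hA'A hv⟩
    · intro q hq
      obtain ⟨j, hj, hqj⟩ := mem_biUnion.1 (hQA hq)
      exact mem_biUnion.2 ⟨j, mem_of_mem_erase hj, (mem_filter.1 hqj).1⟩

/-- Three clusters with all three densities above `3 / 6` contain a `K₁₂`: two vertices of a `K₆` in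
`A`, together with a `K₁₀` in their common neighbourhoods in `B` and `C`. -/
theorem exists_clique_triangle {V : Type} {G : SimpleGraph V} {s η M : ℝ} (hs : 0 < s)
    (hη : 0 < η) (hM : 10 ≤ M) (hMη : 64 ≤ M * η)
    (h6 : ∀ S : Finset V, s ≤ #S → ∃ Q ⊆ S, G.IsNClique 6 Q)
    {A B C : Finset V} (hAB : LR G s (3 / 6 + η) A B) (hAC : LR G s (3 / 6 + η) A C)
    (hBC : LR G s (3 / 6 + η) B C)
    (hA : M ^ 2 * s ≤ #A) (hB : M ^ 2 * s ≤ #B) (hC : M ^ 2 * s ≤ #C) :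
    ∃ Q : Finset V, G.IsClique (Q : Set V) ∧ 12 ≤ #Q := by
  have h4 : (3 / 6 + η : ℝ) = (((4 : ℕ) : ℝ) - 1) / 6 + η := by norm_num
  rw [h4] at hAB hAC hBC
  have hMs : 10 * s ≤ M ^ 2 * s := by gcongr; nlinarith
  obtain ⟨A', hA'A, hA's, hA'⟩ := exists_typical hs A (univ : Finset Bool)
    (fun b => cond b B C) (fun _ => (((4 : ℕ) : ℝ) - 1) / 6 + η)
    (fun b _ => by cases b <;> assumption) (fun b _ => by cases b <;> dsimp only [cond] <;> linarith)
    (by simp; linarith)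
  obtain ⟨Q, hQA, hQ⟩ := h6 A' hA's
  have hpos : ∀ X : Finset V, M ^ 2 * s ≤ #X → 0 < #X := fun X hX => by
    have : (0 : ℝ) < #X := lt_of_lt_of_le (by positivity) hX
    exact_mod_cast this
  have hsize : ∀ X X' : Finset V, M ^ 2 * s ≤ #X → η / 64 * #X ≤ #X' → M * s ≤ #X' :=
    fun X X' hX hX' => by
      have : η / 64 * (M ^ 2 * s) ≤ η / 64 * #X := by gcongr
      have h1 : 64 * (M * s) ≤ M * η * (M * s) := by gcongr
      nlinarith
  obtain ⟨T, hTQ, hT, B', hB'B, hB', hTB⟩ := exists_common (ℓ := 4) hη (by norm_num) hQ.card_eq (hpos B hB)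
    (fun v hv => hA' v (hQA hv) true (mem_univ _))
  obtain ⟨U, hUQ, hU, C', hC'C, hC', hUC⟩ := exists_common (ℓ := 4) hη (by norm_num) hQ.card_eq (hpos C hC)
    (fun v hv => hA' v (hQA hv) false (mem_univ _))
  -- `T` and `U` have at least four elements in a set of six, so they share two.
  have hTU : 2 ≤ #(T ∩ U) := by
    have h1 := card_union_add_card_inter T U
    have h2 := card_le_card (union_subset hTQ hUQ)
    rw [hQ.card_eq] at h2
    omega
  obtain ⟨R, hR, hRc, hRs⟩ := exists_clique_pair (ℓ := 4) hs hη hM hMη (by norm_num) h6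
    (hBC.mono hB'B hC'C) (hsize B B' hB hB') (hsize C C' hC hC')
  have := isClique_union
    (hQ.isClique.subset (coe_subset.2 (inter_subset_left.trans hTQ : T ∩ U ⊆ Q))) hR
    fun a ha b hb => by
      rcases mem_union.1 (hRs hb) with hb | hb
      · exact hTB a (mem_inter.1 ha).1 b hb
      · exact hUC a (mem_inter.1 ha).2 b hb
  exact ⟨(T ∩ U) ∪ R, this.1, by rw [this.2]; omega⟩

/-! ### The weighted Turán problem -/

/-- The Lagrangian-type quadratic form `∑ i, ∑ j, w i j * x i * x j` of a weighted graph `w`; every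
edge is counted in both orders. -/
def quadForm {ι : Type} [Fintype ι] (w : ι → ι → ℝ) (x : ι → ℝ) : ℝ :=
  ∑ i, ∑ j, w i j * x i * x j

/-- Moving weight between two non-adjacent vertices `a` and `b` changes the form linearly: the
quadratic terms in `t` only involve `w a a`, `w b b` and `w a b`, which vanish. -/
theorem quadForm_shift {ι : Type} [Fintype ι] {w : ι → ι → ℝ} (hsymm : ∀ i j, w i j = w j i)
    (hdiag : ∀ i, w i i = 0) (x : ι → ℝ) {a b : ι} (hab : w a b = 0) (t : ℝ) :
    quadForm w (fun i => x i + t * ((if i = a then 1 else 0) - if i = b then 1 else 0)) =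
      quadForm w x + 2 * t * (∑ j, w a j * x j - ∑ j, w b j * x j) := by
  have hba : w b a = 0 := by rw [hsymm, hab]
  set y : ι → ℝ := fun i => (if i = a then 1 else 0) - if i = b then 1 else 0 with hy
  have h1 : ∀ z : ι → ℝ, ∑ i, y i * z i = z a - z b := fun z => by
    simp [hy, sub_mul, sum_sub_distrib]
  have h2 : quadForm w (fun i => x i + t * y i) = quadForm w x
      + t * ∑ i, y i * ∑ j, w i j * x j + t * ∑ j, y j * ∑ i, w j i * x i
      + t ^ 2 * ∑ i, y i * ∑ j, y j * w i j := by
    have h3 : ∑ j, y j * ∑ i, w j i * x i = ∑ i, ∑ j, y j * (w i j * x i) := by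
      rw [sum_comm]
      refine sum_congr rfl fun j _ => ?_
      rw [mul_sum]
      exact sum_congr rfl fun i _ => by rw [hsymm]
    -- Both middle sums have the same form; only one of them needs the reindexing.
    nth_rewrite 2 [h3]
    simp only [quadForm, mul_sum, ← sum_add_distrib]
    exact sum_congr rfl fun i _ => sum_congr rfl fun j _ => by ring
  rw [h2]
  simp only [h1, hdiag, hab, hba]
  ring

/-- The case of three clusters; for `θ = 0` the exact maximum is `16 / 39`, attained at
`(x, y, z) = (5, 4, 4) / 13`. -/
theorem triangle_bound {θ x y z p q r : ℝ} (hθ : 0 ≤ θ) (hx : 0 ≤ x) (hy : 0 ≤ y) (hz : 0 ≤ z)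
    (h : x + y + z = 1) (hp : p ≤ 4 / 6 + θ) (hq : q ≤ 4 / 6 + θ) (hr : r ≤ 3 / 6 + θ) :
    2 * (p * (x * y) + q * (x * z) + r * (y * z)) ≤ 5 / 12 + θ := by
  have h1 : p * (x * y) ≤ (4 / 6 + θ) * (x * y) := by gcongr
  have h2 : q * (x * z) ≤ (4 / 6 + θ) * (x * z) := by gcongr
  have h3 : r * (y * z) ≤ (3 / 6 + θ) * (y * z) := by gcongr
  have hx' : x = 1 - y - z := by linarith
  have h4 : θ * (2 * (x * y + x * z + y * z)) ≤ θ * 1 := by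
    gcongr
    subst hx'
    nlinarith [sq_nonneg y, sq_nonneg z, sq_nonneg (1 - y - z)]
  have h5 : 2 * (4 / 6 * (x * y) + 4 / 6 * (x * z) + 3 / 6 * (y * z)) ≤ 5 / 12 := by
    subst hx'
    nlinarith [sq_nonneg (y - z), sq_nonneg (y + z - 8 / 13)]
  nlinarith

/-- The weighted Turán bound. `hgen` bounds the weights inside a clique of `r + 2` vertices by
`(5 - r) / 6 + θ`, and `htri` forbids triangles all of whose weights exceed `3 / 6 + θ`.
By induction on the support of `x`, weight is shifted between non-adjacent vertices until the support
is a clique; the bound is then checked for each size of the support. -/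
theorem quadForm_le {ι : Type} [Fintype ι] {w : ι → ι → ℝ} {θ : ℝ} (hθ : 0 ≤ θ)
    (hsymm : ∀ i j, w i j = w j i) (hdiag : ∀ i, w i i = 0) (hw : ∀ i j, 0 ≤ w i j)
    (hgen : ∀ (r : ℕ) (I : Finset ι), r ≤ 3 → #I = r + 2 →
      (∀ i ∈ I, ∀ j ∈ I, i ≠ j → 0 < w i j) →
      ∀ i ∈ I, ∀ j ∈ I, i ≠ j → w i j ≤ (5 - r) / 6 + θ)
    (htri : ∀ a b c, 0 < w a b → 0 < w a c → 0 < w b c →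
      w a b ≤ 3 / 6 + θ ∨ w a c ≤ 3 / 6 + θ ∨ w b c ≤ 3 / 6 + θ)
    (x : ι → ℝ) (hx : ∀ i, 0 ≤ x i) (hsum : ∑ i, x i = 1) :
    quadForm w x ≤ 5 / 12 + θ := by
  induction hN : #(univ.filter fun i => x i ≠ 0) using Nat.strong_induction_on generalizing x with
  | _ N ih =>
  set S := univ.filter fun i => x i ≠ 0 with hS
  have hmem : ∀ i, i ∈ S ↔ x i ≠ 0 := fun i => by simp [hS]
  by_cases hcl : ∀ i ∈ S, ∀ j ∈ S, i ≠ j → 0 < w i j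
  swap
  · have key : ∀ a ∈ S, ∀ b ∈ S, a ≠ b → w a b = 0 →
        ∑ j, w b j * x j ≤ ∑ j, w a j * x j → quadForm w x ≤ 5 / 12 + θ := by
      intro a ha b hb hab hwab hle
      set x' : ι → ℝ := fun i => x i + x b * ((if i = a then 1 else 0) - if i = b then 1 else 0)
        with hx'
      have hx'b : x' b = 0 := by simp [hx', hab.symm]
      have hx'i : ∀ i, i ≠ b → x i ≤ x' i := fun i hi => by
        have := hx b
        by_cases hia : i = a <;> simp [hx', hi, hia]
        simp [hab, this]
      have hmono : quadForm w x ≤ quadForm w x' := by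
        rw [hx', quadForm_shift hsymm hdiag x hwab]
        have := hx b
        nlinarith
      refine hmono.trans (ih _ ?_ x' ?_ ?_ rfl)
      · rw [← hN]
        refine card_lt_card ⟨fun i hi => ?_, fun hsub => ?_⟩
        · have hi' : x' i ≠ 0 := by simpa using hi
          rw [hmem]
          intro h0
          by_cases hia : i = a
          · exact (hmem a).1 ha (hia ▸ h0)
          · by_cases hib : i = b
            · exact hi' (hib ▸ hx'b)
            · exact hi' (by simp [hx', hia, hib, h0])
        · have := hsub hb
          simp [hx'b] at this
      · intro i
        by_cases hib : i = b
        · rw [hib, hx'b]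
        · exact (hx i).trans (hx'i i hib)
      · rw [hx', sum_add_distrib, hsum, ← mul_sum]
        simp
    push Not at hcl
    obtain ⟨a, ha, b, hb, hab, hwab⟩ := hcl
    have h0 : w a b = 0 := le_antisymm hwab (hw a b)
    rcases le_total (∑ j, w b j * x j) (∑ j, w a j * x j) with h | h
    · exact key a ha b hb hab h0 h
    · exact key b hb a ha hab.symm (by rw [hsymm, h0]) h
  have hsumS : ∑ i ∈ S, x i = 1 := by
    rw [← hsum, hS, sum_filter_ne_zero]
  have hQ : quadForm w x = ∑ i ∈ S, ∑ j ∈ S, w i j * x i * x j := by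
    unfold quadForm
    rw [← sum_subset (subset_univ S) fun i _ hi => ?_]
    · refine sum_congr rfl fun i _ => ?_
      rw [← sum_subset (subset_univ S) fun j _ hj => ?_]
      rw [not_not.1 (mt (hmem j).2 hj), mul_zero]
    · rw [not_not.1 (mt (hmem i).2 hi)]; simp
  -- A uniform bound `c` on the weights gives `c * (1 - 1 / #S)` through Cauchy-Schwarz (`hcs`).
  have huni : ∀ c : ℝ, 0 ≤ c → (∀ i ∈ S, ∀ j ∈ S, i ≠ j → w i j ≤ c) →
      quadForm w x ≤ c * (1 - ∑ i ∈ S, x i ^ 2) := by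
    intro c hc hwc
    have h1 : quadForm w x ≤ ∑ i ∈ S, ∑ j ∈ S, (c * (x i * x j) - if i = j then c * x i ^ 2 else 0) := by
      rw [hQ]
      refine sum_le_sum fun i hi => sum_le_sum fun j hj => ?_
      by_cases hij : i = j
      · subst hij
        rw [hdiag, if_pos rfl]
        nlinarith
      · rw [if_neg hij, mul_assoc, sub_zero]
        exact mul_le_mul_of_nonneg_right (hwc i hi j hj hij) (mul_nonneg (hx i) (hx j))
    refine h1.trans (le_of_eq ?_)
    have h2 : ∑ i ∈ S, ∑ j ∈ S, c * (x i * x j) = c := by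
      simp only [← mul_sum]
      rw [← sum_mul, hsumS]; simp
    simp only [sum_sub_distrib, h2]
    rw [mul_sub, mul_one, mul_sum]
    congr 1
    refine sum_congr rfl fun i hi => ?_
    simp [hi]
  have hsq : 0 ≤ ∑ i ∈ S, x i ^ 2 := sum_nonneg fun i _ => sq_nonneg _
  have hcs : (1 : ℝ) ≤ #S * ∑ i ∈ S, x i ^ 2 := by
    have := sq_sum_le_card_mul_sum_sq (s := S) (f := x)
    rwa [hsumS, one_pow] at this
  rcases lt_or_ge (#S) 5 with h5 | h5
  · rcases (by omega : #S ≤ 1 ∨ #S = 2 ∨ #S = 3 ∨ #S = 4) with h | h | h | h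
    · have := huni 0 le_rfl fun i hi j hj hij => absurd (card_le_one.1 h i hi j hj) hij
      linarith
    · have := huni _ (by positivity) fun i hi j hj hij =>
        (hgen 0 S (by norm_num) h hcl i hi j hj hij).trans
          (by norm_num : ((5 : ℝ) - (0 : ℕ)) / 6 + θ ≤ 5 / 6 + θ)
      rw [h] at hcs
      push_cast at hcs
      nlinarith
    · have h3 := hgen 1 S (by norm_num) h hcl
      obtain ⟨a, b, c, hab, hac, hbc, hSe⟩ := card_eq_three.1 h
      have ha : a ∈ S := by simp [hSe]
      have hb : b ∈ S := by simp [hSe]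
      have hc : c ∈ S := by simp [hSe]
      have e1 := h3 a ha b hb hab
      have e2 := h3 a ha c hc hac
      have e3 := h3 b hb c hc hbc
      norm_num at e1 e2 e3
      have hs3 : x a + x b + x c = 1 := by
        rw [← hsumS, hSe, sum_insert (by simp [hab, hac]), sum_pair hbc, add_assoc]
      have hform : quadForm w x
          = 2 * (w a b * (x a * x b) + w a c * (x a * x c) + w b c * (x b * x c)) := by
        rw [hQ, hSe]
        simp only [sum_insert (show a ∉ ({b, c} : Finset ι) by simp [hab, hac]), sum_pair hbc]
        rw [hdiag, hdiag, hdiag, hsymm b a, hsymm c a, hsymm c b]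
        ring
      rw [hform]
      rcases htri a b c (hcl a ha b hb hab) (hcl a ha c hc hac) (hcl b hb c hc hbc) with h | h | h
      · have := triangle_bound hθ (hx c) (hx a) (hx b) (by linarith) (p := w a c) (q := w b c)
          (r := w a b) (by linarith) (by linarith) (by linarith)
        linarith
      · have := triangle_bound hθ (hx b) (hx a) (hx c) (by linarith) (p := w a b) (q := w b c)
          (r := w a c) (by linarith) (by linarith) (by linarith)
        linarith
      · have := triangle_bound hθ (hx a) (hx b) (hx c) (by linarith) (p := w a b) (q := w a c)
          (r := w b c) (by linarith) (by linarith) (by linarith)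
        linarith
    · have := huni _ (by positivity) fun i hi j hj hij =>
        (hgen 2 S (by norm_num) h hcl i hi j hj hij).trans
          (by norm_num : ((5 : ℝ) - (2 : ℕ)) / 6 + θ ≤ 3 / 6 + θ)
      rw [h] at hcs
      push_cast at hcs
      nlinarith
  -- With five or more clusters, any two of them lie in a clique of five.
  · have := huni (2 / 6 + θ) (by positivity) fun i hi j hj hij => by
      obtain ⟨I, hI1, hI2, hI3⟩ := exists_subsuperset_card_eq (s := {i, j}) (t := S) (n := 5)
        (by simp [insert_subset_iff, hi, hj]) (by rw [card_pair hij]; norm_num) h5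
      have := hgen 3 I le_rfl hI3 (fun a ha b hb => hcl a (hI2 ha) b (hI2 hb)) i
        (hI1 (by simp)) j (hI1 (by simp)) hij
      refine this.trans ?_
      norm_num
    nlinarith

/-! ### Regularity partitions and the reduced graph -/

/-- An `ε`-uniform pair is lower regular, for any threshold `s` that exceeds the relative threshold
`ε` of both sides. -/
theorem LR_of_isUniform {V : Type} {G : SimpleGraph V} {ε s d : ℝ} (hs : 0 < s)
    {U W : Finset V} (h : G.IsUniform ε U W) (hU : #U * ε ≤ s) (hW : #W * ε ≤ s)
    (hd : d ≤ (G.edgeDensity U W : ℝ) - ε) : LR G s d U W := by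
  intro A hA B hB hsA hsB
  have h1 := abs_lt.1 (h hA hB (hU.trans hsA) (hW.trans hsB))
  have hA0 : (0 : ℝ) < #A := hs.trans_le hsA
  have hB0 : (0 : ℝ) < #B := hs.trans_le hsB
  have h2 : ((G.edgeDensity A B : ℚ) : ℝ) * (#A * #B) = #(G.interedges A B) := by
    rw [SimpleGraph.edgeDensity_def]
    push_cast
    field_simp
  rw [mul_assoc, ← h2]
  gcongr
  linarith [h1.1]

/-- Sets larger than `α_p(G)` contain a `K_p`. The set defining `alphaP` is bounded by the number of
vertices, so its supremum is a genuine one. -/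
theorem exists_nclique_of_alphaP_lt {V : Type} [Fintype V] {G : SimpleGraph V} {p : ℕ} {s : ℝ}
    (h : (alphaP p G : ℝ) < s) (S : Finset V) (hS : s ≤ #S) : ∃ Q ⊆ S, G.IsNClique p Q := by
  by_contra! hc
  have : #S ≤ alphaP p G := by
    refine le_csSup ⟨Fintype.card V, ?_⟩ ⟨S, rfl, hc⟩
    rintro k ⟨T, rfl, -⟩
    exact card_le_univ T
  have : (#S : ℝ) ≤ alphaP p G := by exact_mod_cast this
  linarith

theorem two_mul_edgeCount {V : Type} [Fintype V] (G : SimpleGraph V) :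
    2 * edgeCount G = #(univ.filter fun e : V × V => G.Adj e.1 e.2) := by
  rw [edgeCount, ← SimpleGraph.coe_edgeFinset, Set.ncard_coe_finset]
  rw [SimpleGraph.two_mul_card_edgeFinset]

/-- The weighted reduced graph of a partition `P`: a pair of distinct clusters has its edge density
as weight if it is `ε`-uniform of density at least `δ`, and weight `0` otherwise. -/
noncomputable def redWeight {V : Type} [Fintype V] (G : SimpleGraph V) (ε δ : ℝ)
    (P : Finpartition (univ : Finset V)) (U W : P.parts) : ℝ :=
  if U ≠ W ∧ G.IsUniform ε (U : Finset V) W ∧ δ ≤ (G.edgeDensity (U : Finset V) W : ℝ)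
  then (G.edgeDensity (U : Finset V) W : ℝ) else 0

/-- All edges but a small proportion run between clusters joined in the reduced graph. The error
terms count the pairs of vertices in non-uniform pairs, inside a cluster, and the edges in sparse
pairs. -/
theorem two_mul_edgeCount_le {V : Type} [Fintype V] [Nonempty V] (G : SimpleGraph V)
    {ε δ κ : ℝ} (hε : 0 < ε) (hδ : 0 < δ) (hκ : 0 < κ) {P : Finpartition (univ : Finset V)}
    (hP : P.IsEquipartition) (hPu : P.IsUniform G ε) (hk : 4 / κ ≤ #P.parts) :
    (2 * edgeCount G : ℝ) ≤ (4 * ε + κ / 2 + 4 * δ) * (Fintype.card V : ℝ) ^ 2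
      + ∑ U : P.parts, ∑ W : P.parts, redWeight G ε δ P U W * #(U : Finset V) * #(W : Finset V) := by
  let A := (P.nonUniforms G ε).biUnion fun (U, W) ↦ U ×ˢ W
  let B := P.parts.biUnion offDiag
  let C := (P.sparsePairs G δ).biUnion fun (U, W) ↦ G.interedges U W
  let f : P.parts × P.parts → Finset (V × V) := fun p =>
    if p.1 ≠ p.2 ∧ G.IsUniform ε (p.1 : Finset V) p.2 ∧
      δ ≤ (G.edgeDensity (p.1 : Finset V) p.2 : ℝ)
    then G.interedges (p.1 : Finset V) p.2 else ∅
  let D := univ.biUnion f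
  have hsub : (univ.filter fun e : V × V => G.Adj e.1 e.2) ⊆ A ∪ B ∪ C ∪ D := by
    rintro ⟨x, y⟩ hxy
    have hxy : G.Adj x y := by simpa using hxy
    obtain ⟨U, hU, hx⟩ := P.exists_mem (mem_univ x)
    obtain ⟨W, hW, hy⟩ := P.exists_mem (mem_univ y)
    rw [mem_union, mem_union, mem_union]
    by_cases hUW : U = W
    · subst hUW
      exact Or.inl (Or.inl (Or.inr (mem_biUnion.2 ⟨U, hU, mem_offDiag.2 ⟨hx, hy, hxy.ne⟩⟩)))
    by_cases hu : G.IsUniform ε U W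
    swap
    · exact Or.inl (Or.inl (Or.inl (mem_biUnion.2 ⟨(U, W),
        (P.mk_mem_nonUniforms G).2 ⟨hU, hW, hUW, hu⟩, mem_product.2 ⟨hx, hy⟩⟩)))
    by_cases hd : δ ≤ (G.edgeDensity U W : ℝ)
    · refine Or.inr (mem_biUnion.2 ⟨(⟨U, hU⟩, ⟨W, hW⟩), mem_univ _, ?_⟩)
      have : (⟨U, hU⟩ : P.parts) ≠ ⟨W, hW⟩ := fun h => hUW (congrArg Subtype.val h)
      simp only [f]
      rw [if_pos ⟨this, hu, hd⟩]
      exact (SimpleGraph.mk_mem_interedges_iff G).2 ⟨hx, hy, hxy⟩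
    · exact Or.inl (Or.inr (mem_biUnion.2 ⟨(U, W),
        (P.mk_mem_sparsePairs G U W δ).2 ⟨hU, hW, hUW, not_le.1 hd⟩,
        (SimpleGraph.mk_mem_interedges_iff G).2 ⟨hx, hy, hxy⟩⟩))
  have hA : (#A : ℝ) < 4 * ε * (#(univ : Finset V) : ℝ) ^ 2 :=
    hP.sum_nonUniforms_lt univ_nonempty hε hPu
  have hB : (#B : ℝ) ≤ κ / 2 * (#(univ : Finset V) : ℝ) ^ 2 := hP.card_biUnion_offDiag_le hκ hk
  have hC : (#C : ℝ) ≤ 4 * δ * (#(univ : Finset V) : ℝ) ^ 2 :=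
    hP.card_interedges_sparsePairs_le hδ.le
  have hD : (#D : ℝ) ≤ ∑ U : P.parts, ∑ W : P.parts,
      redWeight G ε δ P U W * #(U : Finset V) * #(W : Finset V) := by
    rw [← Fintype.sum_prod_type' (f := fun U W : P.parts =>
      redWeight G ε δ P U W * #(U : Finset V) * #(W : Finset V))]
    have h1 : (#D : ℝ) ≤ ∑ p, (#(f p) : ℝ) := by exact_mod_cast card_biUnion_le
    refine h1.trans (sum_le_sum fun p _ => ?_)
    simp only [f, redWeight]
    split_ifs with h
    · have hU : (0 : ℝ) < #(p.1 : Finset V) := by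
        exact_mod_cast (P.nonempty_of_mem_parts p.1.2).card_pos
      have hW : (0 : ℝ) < #(p.2 : Finset V) := by
        exact_mod_cast (P.nonempty_of_mem_parts p.2.2).card_pos
      rw [SimpleGraph.edgeDensity_def]
      push_cast
      apply le_of_eq
      field_simp
    · simp
  rw [card_univ] at hA hB hC
  have hcard : (#(univ.filter fun e : V × V => G.Adj e.1 e.2) : ℝ) ≤ #A + #B + #C + #D := by
    have h1 := card_le_card hsub
    have h2 := card_union_le (A ∪ B ∪ C) D
    have h3 := card_union_le (A ∪ B) C
    have h4 := card_union_le A B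
    exact_mod_cast (by omega)
  have h2e : (2 * edgeCount G : ℝ) = #(univ.filter fun e : V × V => G.Adj e.1 e.2) := by
    exact_mod_cast two_mul_edgeCount G
  rw [h2e]
  linarith

/-- In a `K₁₂`-free graph all of whose sets of size `s` contain a `K₆`, the reduced graph satisfies the
hypotheses of `quadForm_le`, with `θ = 2 * η`: the regularity error `ε ≤ η` is paid on top of the
margin `η` of the embedding lemmas. -/
theorem quadForm_redWeight_le {V : Type} [Fintype V] {G : SimpleGraph V} {s η M d₀ ε : ℝ}
    (hs : 0 < s) (hη : 0 < η) (hM : 10 ≤ M) (hMη : 64 ≤ M * η) (hd₀ : 0 < d₀) (hd₁ : d₀ ≤ 1)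
    (hεη : ε ≤ η) (hεd : ε ≤ d₀)
    (h6 : ∀ S : Finset V, s ≤ #S → ∃ Q ⊆ S, G.IsNClique 6 Q) (hG : G.CliqueFree 12)
    {P : Finpartition (univ : Finset V)} (hupper : ∀ U ∈ P.parts, #U * ε ≤ s)
    (hlower : ∀ U ∈ P.parts, M ^ 2 * s ≤ d₀ ^ 3 * #U)
    (x : P.parts → ℝ) (hx : ∀ i, 0 ≤ x i) (hsum : ∑ i, x i = 1) :
    quadForm (redWeight G ε (2 * d₀) P) x ≤ 5 / 12 + 2 * η := by
  have hno : ∀ Q : Finset V, G.IsClique (Q : Set V) → ¬ 12 ≤ #Q := fun Q hQ hc =>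
    (hG.mono hc) Q ⟨hQ, rfl⟩
  have hdens : ∀ {U W : P.parts}, 0 < redWeight G ε (2 * d₀) P U W →
      U ≠ W ∧ G.IsUniform ε (U : Finset V) W ∧ 2 * d₀ ≤ redWeight G ε (2 * d₀) P U W ∧
      redWeight G ε (2 * d₀) P U W = G.edgeDensity (U : Finset V) W := by
    intro U W h
    unfold redWeight at h ⊢
    split_ifs at h ⊢ with hc
    · exact ⟨hc.1, hc.2.1, hc.2.2, rfl⟩
    · exact absurd h (lt_irrefl _)
  have hLR : ∀ {U W : P.parts}, 0 < redWeight G ε (2 * d₀) P U W → ∀ d,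
      d ≤ redWeight G ε (2 * d₀) P U W - ε → LR G s d (U : Finset V) W := by
    intro U W h d hd
    obtain ⟨-, hu, -, he⟩ := hdens h
    exact LR_of_isUniform hs hu (hupper U U.2) (hupper W W.2) (he ▸ hd)
  have hlower' : ∀ U ∈ P.parts, M ^ 2 * s ≤ #U := fun U hU => (hlower U hU).trans <| by
    have : d₀ ^ 3 ≤ 1 := pow_le_one₀ hd₀.le hd₁
    have h0 : (0 : ℝ) ≤ #U := by positivity
    nlinarith
  refine quadForm_le (by positivity) ?_ ?_ ?_ ?_ ?_ x hx hsum
  · intro U W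
    unfold redWeight
    have hu : G.IsUniform ε (U : Finset V) W ↔ G.IsUniform ε (W : Finset V) U :=
      SimpleGraph.isUniform_comm G
    rw [SimpleGraph.edgeDensity_comm G (U : Finset V) W]
    exact if_congr (and_congr ne_comm (and_congr hu Iff.rfl)) rfl rfl
  · intro U
    simp [redWeight]
  · intro U W
    unfold redWeight
    split_ifs
    · exact_mod_cast G.edgeDensity_nonneg _ _
    · exact le_rfl
  · intro r I hr hI hpos i hi j hj hij
    by_contra! hc
    have hr' : ((6 - r : ℕ) : ℝ) = 6 - r := by rw [Nat.cast_sub (by omega)]; norm_num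
    -- The size of the clique is `r + (6 - r) + 6 = 12`.
    obtain ⟨Q, hQ, hQc, -⟩ := exists_clique_generic (ℓ := 6 - r) hs hη hM hMη hd₀ hd₁ (by omega) h6
      r hr I (fun U : P.parts => (U : Finset V)) hi hj hij hI
      (fun a ha b hb hab => hLR (hpos a ha b hb hab) _ (by
        linarith [(hdens (hpos a ha b hb hab)).2.2.1]))
      (hLR (hpos i hi j hj hij) _ (by rw [hr']; linarith))
      (fun a _ => by
        have h1 := hlower a a.2
        have h2 : d₀ ^ 3 ≤ d₀ ^ r := pow_le_pow_of_le_one hd₀.le hd₁ hr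
        have h3 : d₀ ^ 3 * (#(a : Finset V) : ℝ) ≤ d₀ ^ r * #(a : Finset V) := by gcongr
        have h4 : M * s ≤ M ^ 2 * s := by gcongr; nlinarith
        linarith)
    exact hno Q hQ (by omega)
  · intro a b c hab hac hbc
    by_contra! hc
    obtain ⟨Q, hQ, hQc⟩ := exists_clique_triangle hs hη hM hMη h6
      (hLR hab _ (by linarith [hc.1])) (hLR hac _ (by linarith [hc.2.1]))
      (hLR hbc _ (by linarith [hc.2.2])) (hlower' a a.2) (hlower' b b.2) (hlower' c c.2)
    exact hno Q hQ hQc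

/-- The bound on ordered pairs of adjacent vertices, measured against `n ^ 2`. -/
theorem edgeCount_bound (d : ℝ) (hd : 0 < d) (hd1 : d ≤ 1) :
    ∃ (ε : ℝ) (l : ℕ), 0 < ε ∧ ∀ (V : Type) [Fintype V] (G : SimpleGraph V),
      l ≤ Fintype.card V → G.CliqueFree 12 → (alphaP 6 G : ℝ) ≤ ε * Fintype.card V →
        (2 * edgeCount G : ℝ) ≤ (5 / 12 + d / 2) * (Fintype.card V : ℝ) ^ 2 := by
  set η := d / 16 with hη
  set M := 1024 / d with hM
  set d₀ := d / 64 with hd₀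
  -- With `s = 2 * ε₁ * n / k` below, this is the largest choice giving `M ^ 2 * s ≤ d₀ ^ 3 * #U`
  -- for clusters `U` of size at least `n / (2 * k)`.
  set ε₁ := d₀ ^ 3 / (4 * M ^ 2) with hε₁
  have hM1 : 1024 ≤ M := by rw [hM, le_div_iff₀ hd]; linarith
  have hd₀0 : 0 < d₀ := by positivity
  have hε₁0 : 0 < ε₁ := by positivity
  have hε₁d : ε₁ ≤ d₀ := by
    rw [hε₁, div_le_iff₀ (by positivity)]
    have h1 : d₀ ^ 3 ≤ d₀ ^ 1 := pow_le_pow_of_le_one hd₀0.le (by linarith) (by norm_num)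
    have h2 : (1 : ℝ) ≤ 4 * M ^ 2 := by nlinarith
    nlinarith
  set l := ⌈32 / d⌉₊ with hl
  have hl1 : 1 ≤ l := Nat.one_le_ceil_iff.2 (by positivity)
  set K := SzemerediRegularity.bound ε₁ l with hK
  have hK0 : 0 < K := SzemerediRegularity.bound_pos ..
  refine ⟨ε₁ / K, l, by positivity, fun V _ G hn hG hα => ?_⟩
  have hn0 : 0 < Fintype.card V := by omega
  have : Nonempty V := Fintype.card_pos_iff.1 hn0
  obtain ⟨P, hP, hPl, hPK, hPu⟩ := szemeredi_regularity G hε₁0 hn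
  set n := Fintype.card V with hndef
  set k := #P.parts with hk
  have hk0 : 0 < k := by omega
  have hkn : k ≤ n := P.card_parts_le_card
  have hnR : (0 : ℝ) < n := by exact_mod_cast hn0
  have hkR : (0 : ℝ) < k := by exact_mod_cast hk0
  have hknR : (k : ℝ) ≤ n := by exact_mod_cast hkn
  set s := 2 * ε₁ * n / k with hs
  have hs0 : 0 < s := by positivity
  have hαs : (alphaP 6 G : ℝ) < s := by
    refine hα.trans_lt ?_
    have h1 : ε₁ / K * n ≤ ε₁ / k * n := by gcongr
    have h2 : s = 2 * (ε₁ / k * n) := by rw [hs]; ring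
    have h3 : 0 < ε₁ / k * n := by positivity
    linarith
  have hupper : ∀ U ∈ P.parts, (#U : ℝ) * ε₁ ≤ s := by
    intro U hU
    have h1 : #U ≤ n / k + 1 := hP.card_part_le_average_add_one hU
    have h2 : (#U : ℝ) ≤ (n : ℝ) / k + 1 := by
      have h3 : ((n / k : ℕ) : ℝ) ≤ (n : ℝ) / k := Nat.cast_div_le
      have h4 : (#U : ℝ) ≤ ((n / k : ℕ) : ℝ) + 1 := by exact_mod_cast h1
      linarith
    have h3 : 1 ≤ (n : ℝ) / k := by rwa [one_le_div hkR]
    have h4 : s = 2 * (n / k) * ε₁ := by rw [hs]; ring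
    rw [h4]
    gcongr
    linarith
  have hlower : ∀ U ∈ P.parts, M ^ 2 * s ≤ d₀ ^ 3 * #U := by
    intro U hU
    have h1 : n / k ≤ #U := hP.average_le_card_part hU
    have h2 : n ≤ 2 * (k * #U) := by
      have h3 := Nat.div_add_mod n k
      have h4 := Nat.mod_lt n hk0
      have h5 : k * (n / k) ≤ k * #U := Nat.mul_le_mul_left k h1
      have h6 : k * 1 ≤ k * (n / k) := Nat.mul_le_mul_left k ((Nat.one_le_div_iff hk0).2 hkn)
      omega
    have h3 : (n : ℝ) / k ≤ 2 * #U := by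
      rw [div_le_iff₀ hkR]
      have : (n : ℝ) ≤ 2 * (k * #U) := by exact_mod_cast h2
      linarith
    have h4 : M ^ 2 * s = d₀ ^ 3 / 2 * (n / k) := by
      rw [hs, hε₁]
      have : M ≠ 0 := by positivity
      field_simp
      ring
    rw [h4]
    have : d₀ ^ 3 / 2 * (n / k) ≤ d₀ ^ 3 / 2 * (2 * #U) := by gcongr
    linarith
  have h4k : 4 / (d / 8) ≤ (k : ℝ) := by
    have h1 : 32 / d ≤ (l : ℝ) := Nat.le_ceil _
    have h2 : (l : ℝ) ≤ k := by exact_mod_cast hPl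
    have h3 : 4 / (d / 8) = 32 / d := by field_simp; norm_num
    linarith
  have hcount := two_mul_edgeCount_le G hε₁0 (by positivity : 0 < 2 * d₀)
    (by positivity : 0 < d / 8) hP hPu h4k
  have hsumn : ∑ U : P.parts, (#(U : Finset V) : ℝ) = n := by
    have h1 : ∑ U ∈ P.parts, #U = n := P.sum_card_parts
    rw [← h1]
    push_cast
    exact sum_coe_sort P.parts fun U => (#U : ℝ)
  have hform := quadForm_redWeight_le (G := G) (η := η) (M := M) hs0 (by positivity) (by linarith)
    (by rw [hM, hη]; field_simp; norm_num) hd₀0 (by linarith) (by linarith) hε₁d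
    (exists_nclique_of_alphaP_lt hαs) hG hupper hlower
    (fun U => (#(U : Finset V) : ℝ) / n) (fun U => by positivity)
    (by rw [← sum_div, hsumn, div_self hnR.ne'])
  have hscale : ∑ U : P.parts, ∑ W : P.parts,
        redWeight G ε₁ (2 * d₀) P U W * #(U : Finset V) * #(W : Finset V)
      = quadForm (redWeight G ε₁ (2 * d₀) P) (fun U => (#(U : Finset V) : ℝ) / n) * n ^ 2 := by
    simp only [quadForm, sum_mul]
    refine sum_congr rfl fun U _ => sum_congr rfl fun W _ => ?_
    field_simp
  rw [hscale] at hcount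
  have h1 := mul_le_mul_of_nonneg_right hform (sq_nonneg (n : ℝ))
  -- The errors add up to at most `d / 16 + d / 16 + d / 8 + d / 8 ≤ d / 2`.
  have h2 : (4 * ε₁ + d / 8 / 2 + 4 * (2 * d₀) + (5 / 12 + 2 * η)) * (n : ℝ) ^ 2
      ≤ (5 / 12 + d / 2) * (n : ℝ) ^ 2 := by
    refine mul_le_mul_of_nonneg_right ?_ (sq_nonneg _)
    linarith
  linarith

/-- Ramsey–Turán upper bound: ρ₆(12) ≤ 5/12. -/
theorem rt_bound_12 (δ : ℝ) (hδ : 0 < δ) :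
    ∃ (ε : ℝ) (n₀ : ℕ), 0 < ε ∧
      ∀ (n : ℕ) (G : SimpleGraph (Fin n)), n₀ ≤ n → G.CliqueFree 12 →
        (alphaP 6 G : ℝ) ≤ ε * (n : ℝ) →
        (edgeCount G : ℝ) ≤ (5 / 12 + δ) * (n.choose 2 : ℝ) := by
  set d := min δ 1 with hd
  have hd0 : 0 < d := lt_min hδ one_pos
  have hd1 : d ≤ 1 := min_le_right _ _
  have hdδ : d ≤ δ := min_le_left _ _
  obtain ⟨ε, l, hε, H⟩ := edgeCount_bound d hd0 hd1
  -- `d * n ≥ 4` absorbs the difference between `n ^ 2 / 2` and `n.choose 2`.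
  refine ⟨ε, max l (⌈4 / d⌉₊), hε, fun n G hn hG hα => ?_⟩
  have h1 := H (Fin n) G (by simpa using (le_max_left _ _).trans hn) hG (by simpa using hα)
  rw [Fintype.card_fin] at h1
  have h2 : 4 / d ≤ n := (Nat.le_ceil _).trans (by exact_mod_cast (le_max_right _ _).trans hn)
  rw [div_le_iff₀ hd0] at h2
  have hn1 : (1 : ℝ) ≤ n := by nlinarith
  rw [Nat.cast_choose_two]
  have h3 : (5 / 12 + d / 2) * (n : ℝ) ≤ (5 / 12 + d) * (n - 1) := by nlinarith
  have h4 : (5 / 12 + d / 2) * (n : ℝ) * n ≤ (5 / 12 + d) * (n - 1) * n := by gcongr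
  have h5 : (5 / 12 + d) * ((n - 1) * n) ≤ (5 / 12 + δ) * ((n - 1) * (n : ℝ)) := by
    have : (0 : ℝ) ≤ (n - 1) * n := mul_nonneg (by linarith) (by linarith)
    gcongr
  linarith
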